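/- Let Γ be a finite-index subgroup of SL₂(ℤ) and let P ⊆ ℚ ∪ {∞} be the Γ-orbit of a cusp. Then for every ε > 0, for Lebesgue-almost every θ ∈ [0,1] there exist infinitely many reduced fractions p/q ∈ P with |θ − p/q| ≤ ε/q². -/

import Mathlib

open Matrix MeasureTheory

/-- The orbit of a cusp `x : ℚ` under a subgroup `Γ ≤ SL₂(ℤ)` acting by Möbius
transformations (keeping only the images that are finite, i.e. not ∞). -/
def cuspOrbit (Γ : Subgroup (Matrix.SpecialLinearGroup (Fin 2) ℤ)) (x : ℚ) : Set ℚ :=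
  {y : ℚ | ∃ γ ∈ Γ,
    (((γ : Matrix (Fin 2) (Fin 2) ℤ) 1 0 : ℚ) * x + ((γ : Matrix (Fin 2) (Fin 2) ℤ) 1 1 : ℚ)) ≠ 0 ∧
    y = (((γ : Matrix (Fin 2) (Fin 2) ℤ) 0 0 : ℚ) * x + ((γ : Matrix (Fin 2) (Fin 2) ℤ) 0 1 : ℚ)) /
        (((γ : Matrix (Fin 2) (Fin 2) ℤ) 1 0 : ℚ) * x + ((γ : Matrix (Fin 2) (Fin 2) ℤ) 1 1 : ℚ))}

/-- An irrational number has arbitrarily good approximations by pairs of columns of a matrix in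
`SL₂(ℤ)`. -/
lemma Irrational.exists_specialLinearGroup_approx {θ : ℝ} (hθ : Irrational θ) (M : ℕ) :
    ∃ g : Matrix.SpecialLinearGroup (Fin 2) ℤ, (M : ℝ) < g 1 0 ∧
      |(g 1 0 : ℝ) * θ - g 0 0| ≤ 2 / g 1 0 ∧
      |(g 1 1 : ℝ)| ≤ g 1 0 ∧ |(g 1 1 : ℝ) * θ - g 0 1| ≤ 2 / g 1 0 := by
  obtain ⟨δ, hδ, hδ0⟩ := ((hθ.eventually_forall_le_dist_cast_rat_of_den_le M).filter_mono
    nhdsWithin_le_nhds |>.and (self_mem_nhdsWithin : Set.Ioi (0 : ℝ) ∈ nhdsWithin 0 _)).exists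
  obtain ⟨n, hn⟩ := exists_nat_one_div_lt hδ0
  obtain ⟨r, hr, hrn⟩ := Real.exists_rat_abs_sub_le_and_den_le θ (Nat.succ_pos n)
  have hq1 : (1 : ℝ) ≤ r.den := by exact_mod_cast r.pos
  have hq0 : (0 : ℝ) < r.den := by linarith
  have hqθ : |(r.den : ℝ) * θ - r.num| ≤ 1 / (n + 2) := by
    have hnum : (r.num : ℝ) = r.den * (r : ℝ) := by
      rw [mul_comm]; exact_mod_cast (Rat.mul_den_eq_num r).symm
    rw [hnum, ← mul_sub, abs_mul, abs_of_pos hq0]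
    calc (r.den : ℝ) * |θ - r| ≤ r.den * (1 / (((n.succ : ℕ) + 1) * r.den)) := by gcongr
      _ = 1 / (n + 2) := by push_cast; field_simp; ring
  have hqn : (r.den : ℝ) ≤ n + 1 := by exact_mod_cast hrn
  have hM : M < r.den := by
    by_contra! h
    have h1 := hδ r h
    rw [Real.dist_eq] at h1
    have h2 : (1 : ℝ) / (((n.succ : ℕ) + 1) * r.den) ≤ 1 / (n + 1) := by
      apply one_div_le_one_div_of_le (by positivity)
      push_cast
      nlinarith [(n.cast_nonneg : (0 : ℝ) ≤ n)]
    linarith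
  have hqθ' : |(r.den : ℝ) * θ - r.num| ≤ 1 / r.den :=
    hqθ.trans (one_div_le_one_div_of_le hq0 (by linarith))
  have hcop : IsCoprime r.num (r.den : ℤ) := by
    rw [Int.isCoprime_iff_nat_coprime]; simpa using r.reduced
  obtain ⟨u, v, huv⟩ := hcop
  have hdiv := Int.emod_add_mul_ediv u r.den
  have hd0 : (0 : ℤ) < r.den := by exact_mod_cast r.pos
  have hu0 := Int.emod_nonneg u hd0.ne'
  have hu1 := Int.emod_lt_of_pos u hd0
  set w := u % r.den
  have hdet : r.num * w + (v + r.num * (u / r.den)) * r.den = 1 := by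
    linear_combination huv + r.num * hdiv
  generalize v + r.num * (u / r.den) = z at hdet
  have hw0 : (0 : ℝ) ≤ w := by exact_mod_cast hu0
  have hw1 : (w : ℝ) ≤ r.den := by exact_mod_cast hu1.le
  have hdet' : (r.num * w + z * r.den : ℝ) = 1 := by exact_mod_cast hdet
  refine ⟨⟨!![r.num, -z; r.den, w], by rw [Matrix.det_fin_two_of]; linarith⟩, ?_⟩
  suffices (M : ℝ) < r.den ∧ |(r.den : ℝ) * θ - r.num| ≤ 2 / r.den ∧
      |(w : ℝ)| ≤ r.den ∧ |(w : ℝ) * θ + z| ≤ 2 / r.den by simpa using this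
  refine ⟨by exact_mod_cast hM, hqθ'.trans (by gcongr; norm_num), by rwa [abs_of_nonneg hw0], ?_⟩
  have key : (w : ℝ) * θ + z = (w * (r.den * θ - r.num) + 1) / r.den := by
    field_simp; linear_combination hdet'
  rw [key, abs_div, abs_of_pos hq0]
  gcongr
  calc |(w : ℝ) * (r.den * θ - r.num) + 1| ≤ |(w : ℝ) * (r.den * θ - r.num)| + |1| := abs_add_le _ _
    _ = w * |(r.den : ℝ) * θ - r.num| + 1 := by rw [abs_mul, abs_of_nonneg hw0, abs_one]
    _ ≤ r.den * (1 / r.den) + 1 := by gcongr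
    _ = 2 := by field_simp; norm_num

/-- Every element can be moved into a finite-index subgroup by right multiplication by an element
of a fixed finite set. -/
lemma Subgroup.exists_finite_forall_exists_mul_mem {G : Type*} [Group G] (H : Subgroup G)
    [H.FiniteIndex] : ∃ T : Set G, T.Finite ∧ ∀ g : G, ∃ k ∈ T, g * k ∈ H := by
  refine ⟨Set.range fun c : G ⧸ H => Quotient.out c, Set.finite_range _, fun g =>
    ⟨_, ⟨QuotientGroup.mk g⁻¹, rfl⟩, ?_⟩⟩
  obtain ⟨h, hh⟩ := QuotientGroup.mk_out_eq_mul H g⁻¹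
  dsimp only
  rw [hh, mul_inv_cancel_left]
  exact h.2

lemma Rat.den_intCast_div_le_natAbs (p : ℤ) {q : ℤ} (hq : q ≠ 0) :
    ((p / q : ℚ)).den ≤ q.natAbs := by
  have h : (((p / q : ℚ)).den : ℤ) ∣ q := by
    simpa [Rat.divInt_eq_div] using Rat.den_dvd p q
  exact Nat.le_of_dvd (Int.natAbs_pos.2 hq) (Int.natCast_dvd.1 h)

/-- Every irrational number is approximable by a cusp orbit to quality `C / q²`, for some `C`
depending only on the orbit. -/
lemma exists_const_cuspOrbit_approx (Γ : Subgroup (Matrix.SpecialLinearGroup (Fin 2) ℤ))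
    [Γ.FiniteIndex] (x : ℚ) : ∃ C : ℝ, 0 < C ∧ ∀ θ : ℝ, Irrational θ → ∀ N : ℕ,
      ∃ r ∈ cuspOrbit Γ x, N < r.den ∧ |θ - (r : ℝ)| ≤ C / (r.den : ℝ) ^ 2 := by
  obtain ⟨T, hT, hTΓ⟩ := Γ.exists_finite_forall_exists_mul_mem
  obtain ⟨A, hA⟩ := (hT.image fun k =>
    |((k 0 0 * x.num + k 0 1 * x.den : ℤ) : ℝ)|).bddAbove
  obtain ⟨B, hB⟩ := (hT.image fun k =>
    |((k 1 0 * x.num + k 1 1 * x.den : ℤ) : ℝ)|).bddAbove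
  obtain ⟨K, hK1, hKA, hKB⟩ : ∃ K : ℝ, 1 ≤ K ∧ A ≤ K ∧ B ≤ K :=
    ⟨max 1 (max A B), by simp, by simp, by simp⟩
  refine ⟨8 * K ^ 2, by positivity, fun θ hθ N => ?_⟩
  obtain ⟨δ, hδ, hδ0⟩ := ((hθ.eventually_forall_le_dist_cast_rat_of_den_le N).filter_mono
    nhdsWithin_le_nhds |>.and (self_mem_nhdsWithin : Set.Ioi (0 : ℝ) ∈ nhdsWithin 0 _)).exists
  obtain ⟨M, hM⟩ := exists_nat_gt (max (4 * K) (4 * K / δ))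
  obtain ⟨g, hMg, h00, h11, h01⟩ := hθ.exists_specialLinearGroup_approx M
  obtain ⟨k, hkT, hgk⟩ := hTΓ g
  have ha := (hA ⟨k, hkT, rfl⟩).trans hKA
  have hb := (hB ⟨k, hkT, rfl⟩).trans hKB
  set a : ℤ := k 0 0 * x.num + k 0 1 * x.den with ha_def
  set b : ℤ := k 1 0 * x.num + k 1 1 * x.den with hb_def
  dsimp only at ha hb
  rw [← ha_def] at ha
  rw [← hb_def] at hb
  set p : ℤ := g 0 0 * a + g 0 1 * b with hp_def
  set q : ℤ := g 1 0 * a + g 1 1 * b with hq_def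
  have hg4 : 4 * K < g 1 0 := (le_max_left _ _).trans_lt (hM.trans hMg)
  have hgδ : 4 * K / δ < g 1 0 := (le_max_right _ _).trans_lt (hM.trans hMg)
  have hg0 : (0 : ℝ) < g 1 0 := by linarith
  have hdet : g 0 0 * g 1 1 - g 0 1 * g 1 0 = 1 := by
    rw [← Matrix.det_fin_two]; exact g.2
  have hdetk : k 0 0 * k 1 1 - k 0 1 * k 1 0 = 1 := by
    rw [← Matrix.det_fin_two]; exact k.2
  have hq_le : |(q : ℝ)| ≤ 2 * K * g 1 0 := by
    rw [hq_def]
    push_cast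
    calc |(g 1 0 * a + g 1 1 * b : ℝ)| ≤ |(g 1 0 : ℝ)| * |(a : ℝ)| + |(g 1 1 : ℝ)| * |(b : ℝ)| := by
          rw [← abs_mul, ← abs_mul]; exact abs_add_le _ _
      _ ≤ g 1 0 * K + g 1 0 * K := by rw [abs_of_pos hg0]; gcongr
      _ = 2 * K * g 1 0 := by ring
  have hqp : |(q : ℝ) * θ - p| ≤ 4 * K / g 1 0 := by
    have : (q : ℝ) * θ - p = (g 1 0 * θ - g 0 0) * a + (g 1 1 * θ - g 0 1) * b := by
      rw [hq_def, hp_def]; push_cast; ring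
    rw [this]
    refine (abs_add_le _ _).trans ?_
    rw [abs_mul, abs_mul]
    calc _ ≤ 2 / (g 1 0 : ℝ) * K + 2 / (g 1 0 : ℝ) * K := by gcongr
      _ = 4 * K / g 1 0 := by ring
  have hq0 : q ≠ 0 := by
    intro hq
    have hp : p = 0 := by
      have h1 : |(p : ℝ)| < 1 := by
        rw [hq] at hqp
        simp only [Int.cast_zero, zero_mul, zero_sub, abs_neg] at hqp
        exact hqp.trans_lt ((div_lt_one hg0).2 hg4)
      exact Int.abs_lt_one_iff.1 (by exact_mod_cast h1)
    have hb0 : b = 0 := by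
      linear_combination g 0 0 * (hq_def.symm.trans hq) - g 1 0 * (hp_def.symm.trans hp) - b * hdet
    have ha0 : a = 0 := by
      linear_combination g 1 1 * (hp_def.symm.trans hp) - g 0 1 * (hq_def.symm.trans hq) - a * hdet
    have : (x.den : ℤ) = 0 := by
      linear_combination k 0 0 * (hb_def.symm.trans hb0) - k 1 0 * (ha_def.symm.trans ha0)
        - x.den * hdetk
    exact x.den_nz (by exact_mod_cast this)
  have hqR : (0 : ℝ) < |(q : ℝ)| := by simpa using hq0
  have hq1 : (1 : ℝ) ≤ |(q : ℝ)| := by exact_mod_cast Int.one_le_abs hq0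
  have hdist : |θ - ((p / q : ℚ) : ℝ)| = |(q : ℝ) * θ - p| / |(q : ℝ)| := by
    have hq0' : (q : ℝ) ≠ 0 := by exact_mod_cast hq0
    rw [← abs_div]; congr 1; push_cast; field_simp
  refine ⟨(p / q : ℚ), ⟨g * k, hgk, ?_⟩, ?_, ?_⟩
  · have hxd : (x.den : ℚ) ≠ 0 := by exact_mod_cast x.den_nz
    have hx : x * x.den = x.num := Rat.mul_den_eq_num x
    have hden : (((g * k : Matrix.SpecialLinearGroup (Fin 2) ℤ) 1 0 : ℤ) : ℚ) * x +
        ((g * k : Matrix.SpecialLinearGroup (Fin 2) ℤ) 1 1 : ℤ) = q / x.den := by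
      rw [eq_div_iff hxd, hq_def, ha_def, hb_def]
      simp only [Matrix.SpecialLinearGroup.coe_mul, Matrix.mul_apply, Fin.sum_univ_two]
      push_cast
      rw [← hx]; ring
    have hnum : (((g * k : Matrix.SpecialLinearGroup (Fin 2) ℤ) 0 0 : ℤ) : ℚ) * x +
        ((g * k : Matrix.SpecialLinearGroup (Fin 2) ℤ) 0 1 : ℤ) = p / x.den := by
      rw [eq_div_iff hxd, hp_def, ha_def, hb_def]
      simp only [Matrix.SpecialLinearGroup.coe_mul, Matrix.mul_apply, Fin.sum_univ_two]
      push_cast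
      rw [← hx]; ring
    have hq0' : (q : ℚ) ≠ 0 := by exact_mod_cast hq0
    rw [hden, hnum]
    exact ⟨div_ne_zero hq0' hxd, by field_simp⟩
  · by_contra! h
    have h1 := hδ _ h
    rw [Real.dist_eq, hdist] at h1
    have h2 : |(q : ℝ) * θ - p| / |(q : ℝ)| ≤ 4 * K / g 1 0 :=
      (div_le_self (abs_nonneg _) hq1).trans hqp
    have h3 : 4 * K / (g 1 0 : ℝ) < δ := (div_lt_comm₀ hδ0 hg0).1 hgδ
    linarith
  · have hle : (((p / q : ℚ)).den : ℝ) ≤ |(q : ℝ)| := by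
      have := Rat.den_intCast_div_le_natAbs p hq0
      rw [← Int.cast_abs, ← Nat.cast_natAbs]
      exact_mod_cast this
    have hpos : (0 : ℝ) < ((p / q : ℚ)).den := by exact_mod_cast Rat.pos _
    calc |θ - ((p / q : ℚ) : ℝ)| = |(q : ℝ) * θ - p| / |(q : ℝ)| := hdist
      _ ≤ 4 * K / g 1 0 / |(q : ℝ)| := by gcongr
      _ ≤ 8 * K ^ 2 / |(q : ℝ)| ^ 2 := by
        rw [div_div, div_le_div_iff₀ (by positivity) (by positivity)]
        nlinarith [mul_le_mul_of_nonneg_left hq_le (by positivity : 0 ≤ 4 * K * |(q : ℝ)|)]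
      _ ≤ 8 * K ^ 2 / (((p / q : ℚ)).den : ℝ) ^ 2 := by gcongr

/-- The quality constant of approximation by a set of rationals can be changed, up to null sets. -/
lemma ae_forall_exists_rat_approx_of_const {P : Set ℚ} {C ε : ℝ} (hC : 0 < C) (hε : 0 < ε)
    (h : ∀ᵐ θ : ℝ, ∀ N : ℕ, ∃ r ∈ P, N < r.den ∧ |θ - (r : ℝ)| ≤ C / (r.den : ℝ) ^ 2) :
    ∀ᵐ θ : ℝ, ∀ N : ℕ, ∃ r ∈ P, N < r.den ∧ |θ - (r : ℝ)| ≤ ε / (r.den : ℝ) ^ 2 := by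
  set s : ℕ → Set ℝ := fun n => {y | ∃ r ∈ P, r.den = n ∧ (r : ℝ) = y}
  have hlim : Filter.Tendsto (fun n : ℕ => C / (n : ℝ) ^ 2) Filter.atTop (nhds 0) :=
    tendsto_const_nhds.div_atTop
      ((Filter.tendsto_pow_atTop two_ne_zero).comp tendsto_natCast_atTop_atTop)
  have key := blimsup_cthickening_mul_ae_eq (volume : Measure ℝ) (fun _ => True) s
    (M := ε / (2 * C)) (by positivity) _ hlim
  filter_upwards [h, key.mem_iff] with θ hθ hiff N
  have hmem : θ ∈ Filter.blimsup
      (fun i : ℕ => Metric.cthickening (C / (i : ℝ) ^ 2) (s i)) Filter.atTop fun _ => True := by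
    rw [Filter.blimsup_true, Filter.mem_limsup_iff_frequently_mem, Filter.frequently_atTop]
    intro n
    obtain ⟨r, hrP, hrn, hr⟩ := hθ n
    exact ⟨r.den, hrn.le, Metric.mem_cthickening_of_dist_le θ r _ _ ⟨r, hrP, rfl, rfl⟩ hr⟩
  rw [← hiff, Filter.blimsup_true, Filter.mem_limsup_iff_frequently_mem,
    Filter.frequently_atTop] at hmem
  obtain ⟨n, hn, hmem⟩ := hmem (N + 1)
  have hn0 : (0 : ℝ) < n := by exact_mod_cast (by omega : 0 < n)
  have hlt : ε / (2 * C) * (C / (n : ℝ) ^ 2) < ε / (n : ℝ) ^ 2 := by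
    have : ε / (2 * C) * (C / (n : ℝ) ^ 2) = ε / (n : ℝ) ^ 2 / 2 := by field_simp
    rw [this]
    exact half_lt_self (by positivity)
  obtain ⟨y, ⟨r, hrP, hrn, rfl⟩, hy⟩ := Metric.mem_thickening_iff.1
    (Metric.cthickening_subset_thickening' (by positivity) hlt _ hmem)
  exact ⟨r, hrP, by omega, by rw [hrn]; exact hy.le⟩

/-- Sullivan's theorem: if `P` is the orbit of a cusp of a finite-index subgroup of
`SL₂(ℤ)`, then for every `ε > 0`, almost every `θ ∈ [0,1]` admits infinitely many
reduced fractions `p/q ∈ P` with `|θ − p/q| ≤ ε/q²`. -/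
theorem sullivan_cusp_orbit_approx
    (Γ : Subgroup (Matrix.SpecialLinearGroup (Fin 2) ℤ)) (hΓ : Γ.FiniteIndex)
    (x : ℚ) (P : Set ℚ) (hP : P = cuspOrbit Γ x) (ε : ℝ) (hε : 0 < ε) :
    ∀ᵐ θ ∂(volume.restrict (Set.Icc (0 : ℝ) 1)),
      ∀ N : ℕ, ∃ r ∈ P, N < r.den ∧ |θ - (r : ℝ)| ≤ ε / (r.den : ℝ) ^ 2 := by
  subst hP
  obtain ⟨C, hC, hCΓ⟩ := exists_const_cuspOrbit_approx Γ x
  refine ae_restrict_of_ae (ae_forall_exists_rat_approx_of_const hC hε ?_)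
  have hirr : ∀ᵐ θ : ℝ, Irrational θ := (Set.countable_range ((↑) : ℚ → ℝ)).ae_notMem volume
  filter_upwards [hirr] with θ hθ using hCΓ θ hθ
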